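/- Let W carry a degree assignment (d_c)_{c∈C} and a combinatorial quasi-fiber structure (g, (m_c), B) of rank r. Assume: (a) for every P ∈ B and every δ ∈ Δ_P there exists μ_δ ∈ k such that M_s(δ) = μ_δ for every s ∈ {1,…,r} with s ≠ g(φ_P(δ)); (b) there exists D ∈ k with Σ_{c∈g^{-1}(s)} d_c·m_c = D in k for every s ∈ {1,…,r}. Then for all a,b ∈ k^r with Σ_{s=1}^r a_s = 0 and Σ_{s=1}^r b_s = 0, one has ω_a ∧ ω_b = 0 in A²_{W,k}. Moreover, if for each s ∈ {1,…,r} there exists c ∈ g^{-1}(s) with p ∤ m_c, then for every a ∈ k^r with Σ_s a_s = 0, dim_k H¹(A*_{W,k}, ·∧ω_a) ≥ r − 2. (Combinatorial form of Theorem 'fibered', part 1.) -/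

import Mathlib

/-!
Modulo `I_P` the wedge `ψ^δ ∧ ψ^δ'` is a coboundary `e δ' - e δ`, with `e = [ψ^o ∧ ψ^·]` for a fixed
branch `o`. Since the intersection multiplicities are symmetric, summation by parts turns the
component of `α ∧ β` at `P` into a combination of the `e δ` whose coefficients are the left-hand
sides of the resonance conditions for `(α, β)`. When the `M_s(δ)` with `s ≠ g(δ)` agree and
`∑ a_s = 0`, pairing `δ` with `ω_a` gives `a_{g(δ)}` times a constant independent of `a`, so
`(ω_a, ω_b)` satisfies the resonance condition at `δ`. The part at infinity vanishes because
`∑ d_c (ω_a)_c = D ∑ a_s = 0`.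

If every quasi-fiber contains a multiplicity prime to `p`, then `b ↦ ω_b` embeds the hyperplane
`∑ b_s = 0`, of rank at least `r - 1`, into the kernel of `· ∧ ω_a`, and dividing by the line
through `ω_a` costs at most one more dimension.
-/

open scoped Classical

/-- The weak combinatorial type of a plane projective curve. -/
structure WeakComb (p : ℕ) where
  /-- the set of irreducible components -/
  C : Type
  [fintypeC : Fintype C]
  [decEqC : DecidableEq C]
  [nonemptyC : Nonempty C]
  /-- the set of singular points -/
  S : Type
  [fintypeS : Fintype S]
  [decEqS : DecidableEq S]
  /-- the local branches at each singular point -/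
  Δ : S → Type
  [fintypeΔ : ∀ P, Fintype (Δ P)]
  [decEqΔ : ∀ P, DecidableEq (Δ P)]
  /-- each branch belongs to a component -/
  φ : ∀ P, Δ P → C
  /-- local intersection multiplicities of pairs of branches -/
  μ : ∀ P, Δ P → Δ P → ℕ
  μ_symm : ∀ P δ δ', φ P δ ≠ φ P δ' → μ P δ δ' = μ P δ' δ
  μ_pos : ∀ P δ δ', φ P δ ≠ φ P δ' → 0 < μ P δ δ'

attribute [instance] WeakComb.fintypeC WeakComb.decEqC WeakComb.nonemptyC
attribute [instance] WeakComb.fintypeS WeakComb.decEqS WeakComb.fintypeΔ WeakComb.decEqΔ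

namespace WeakComb

variable {p : ℕ} (W : WeakComb p)

/-- μ_P(δ,δ') with the convention that it vanishes on pairs of branches of the same component. -/
def muk (P : W.S) (δ δ' : W.Δ P) : ℕ :=
  if W.φ P δ = W.φ P δ' then 0 else W.μ P δ δ'

/-- μ_P(δ, j): the multiplicity of intersection of the branch δ with the component j. -/
def muC (P : W.S) (δ : W.Δ P) (j : W.C) : ℕ :=
  ∑ δ' : W.Δ P, if W.φ P δ' = j then W.muk P δ δ' else 0

/-- A degree assignment: positive degrees satisfying the Bezout condition. -/
def IsDegree (d : W.C → ℕ) : Prop :=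
  (∀ i, 0 < d i) ∧
  ∀ i j, i ≠ j →
    d i * d j = ∑ P : W.S, ∑ δ : W.Δ P, if W.φ P δ = i then W.muC P δ j else 0

/-- The basis vector σ_i of A¹ = (C → ZMod p). -/
noncomputable def sigma (i : W.C) : W.C → ZMod p := Pi.single i 1

/-- The basis vector ψ_P^δ of A_P = (Δ_P → ZMod p). -/
noncomputable def psi (P : W.S) (δ : W.Δ P) : W.Δ P → ZMod p := Pi.single δ 1

/-- ψ_P^δ ∧ ψ_P^δ' as an element of Λ² A_P. -/
noncomputable def psiW (P : W.S) (δ δ' : W.Δ P) : ⋀[ZMod p]^2 (W.Δ P → ZMod p) :=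
  ⟨ExteriorAlgebra.ιMulti (ZMod p) 2 ![W.psi P δ, W.psi P δ'],
   ExteriorAlgebra.ιMulti_range (ZMod p) 2 (Set.mem_range_self _)⟩

/-- The subspace I_P of Λ² A_P. -/
noncomputable def IP (P : W.S) : Submodule (ZMod p) (⋀[ZMod p]^2 (W.Δ P → ZMod p)) :=
  Submodule.span (ZMod p)
    ({x | ∃ δ1 δ2 δ3 : W.Δ P, x = W.psiW P δ1 δ2 + W.psiW P δ2 δ3 + W.psiW P δ3 δ1} ∪
     {x | (∀ δ δ' : W.Δ P, W.φ P δ = W.φ P δ') ∧ ∃ δ1 δ2 : W.Δ P, x = W.psiW P δ1 δ2})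

/-- The degree-two part A² = A^{2,0} ⊕ A^{2,∞} of the Combinatorial Aomoto algebra. -/
abbrev A2 (d : W.C → ℕ) : Type :=
  ((P : W.S) → (⋀[ZMod p]^2 (W.Δ P → ZMod p)) ⧸ W.IP P) ×
  ({i : W.C // p ∣ d i} → ZMod p)

/-- The wedge product A¹ × A¹ → A², extending σ_i ∧ σ_j bilinearly. -/
noncomputable def wedge (d : W.C → ℕ) (α β : W.C → ZMod p) : W.A2 d :=
  (fun P => ∑ δ : W.Δ P, ∑ δ' : W.Δ P,
      (α (W.φ P δ) * β (W.φ P δ') * (W.muk P δ δ' : ZMod p)) •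
        Submodule.Quotient.mk (W.psiW P δ δ'),
   fun i => α i.1 * (∑ j : W.C, (d j : ZMod p) * β j)
          - β i.1 * (∑ j : W.C, (d j : ZMod p) * α j))

/-- The linear map ·∧α : A¹ → A², β ↦ β ∧ α. -/
noncomputable def wedgeL (d : W.C → ℕ) (α : W.C → ZMod p) :
    (W.C → ZMod p) →ₗ[ZMod p] W.A2 d where
  toFun β := W.wedge d β α
  map_add' β γ := by
    refine Prod.ext ?_ ?_
    · funext P
      simp only [wedge, Pi.add_apply, Prod.fst_add]
      rw [← Finset.sum_add_distrib]
      refine Finset.sum_congr rfl fun δ _ => ?_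
      rw [← Finset.sum_add_distrib]
      refine Finset.sum_congr rfl fun δ' _ => ?_
      rw [← add_smul, add_mul, add_mul]
    · funext i
      simp only [wedge, Pi.add_apply, Prod.snd_add]
      rw [show (∑ x : W.C, (d x : ZMod p) * (β x + γ x))
            = (∑ x : W.C, (d x : ZMod p) * β x) + ∑ x : W.C, (d x : ZMod p) * γ x by
        rw [← Finset.sum_add_distrib]; exact Finset.sum_congr rfl fun x _ => by ring]
      ring
  map_smul' c β := by
    refine Prod.ext ?_ ?_
    · funext P
      simp only [wedge, Pi.smul_apply, smul_eq_mul, RingHom.id_apply, Prod.smul_fst]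
      rw [Finset.smul_sum]
      refine Finset.sum_congr rfl fun δ _ => ?_
      rw [Finset.smul_sum]
      refine Finset.sum_congr rfl fun δ' _ => ?_
      rw [smul_smul]
      ring_nf
    · funext i
      simp only [wedge, Pi.smul_apply, smul_eq_mul, RingHom.id_apply, Prod.smul_snd]
      rw [show (∑ x : W.C, (d x : ZMod p) * (c * β x)) = c * ∑ x : W.C, (d x : ZMod p) * β x by
        rw [Finset.mul_sum]; exact Finset.sum_congr rfl fun x _ => by ring]
      ring

/-- The kernel of ·∧α : A¹ → A². -/
noncomputable def wedgeKer (d : W.C → ℕ) (α : W.C → ZMod p) :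
    Submodule (ZMod p) (W.C → ZMod p) :=
  LinearMap.ker (W.wedgeL d α)

/-- H¹ of the Combinatorial Aomoto complex with differential ·∧α. -/
noncomputable abbrev H1 (d : W.C → ℕ) (α : W.C → ZMod p) :=
  (W.wedgeKer d α) ⧸
    (Submodule.comap (W.wedgeKer d α).subtype (Submodule.span (ZMod p) {α}))

end WeakComb

namespace WeakComb

variable {p : ℕ} (W : WeakComb p)

/-- The resonance condition for (α,β) at the branch δ of the point P. -/
def ResCond (α β : W.C → ZMod p) (P : W.S) (δ : W.Δ P) : Prop :=
  β (W.φ P δ) * (∑ j : W.C, (W.muC P δ j : ZMod p) * α j)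
    - α (W.φ P δ) * (∑ j : W.C, (W.muC P δ j : ZMod p) * β j) = 0

/-- P is a p-transversal point for the pair of components i ≠ j. -/
def PTransPoint (P : W.S) (i j : W.C) : Prop :=
  i ≠ j ∧ (∀ δ : W.Δ P, W.φ P δ = i ∨ W.φ P δ = j) ∧
  (∃ δ : W.Δ P, W.φ P δ = i) ∧ (∃ δ : W.Δ P, W.φ P δ = j) ∧
  ((∃ δ : W.Δ P, W.φ P δ = i ∧ ((W.muC P δ j : ZMod p) ≠ 0)) ∨
   (∃ δ : W.Δ P, W.φ P δ = j ∧ ((W.muC P δ i : ZMod p) ≠ 0)))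

/-- The components i and j are p-transversal at a point. -/
def PTransComponents (i j : W.C) : Prop := ∃ P : W.S, W.PTransPoint P i j

/-- α is non-coordinate if all its coordinates are nonzero. -/
def NonCoordinate (α : W.C → ZMod p) : Prop := ∀ i, α i ≠ 0

end WeakComb

/-- The setoid (partition) obtained from s by merging the classes of c₀ and c₁. -/
def mergeSetoid {α : Type*} (s : Setoid α) (c₀ c₁ : α) : Setoid α :=
  Relation.EqvGen.setoid (fun a b => s.r a b ∨ (a = c₀ ∧ b = c₁))

namespace WeakComb

variable {p : ℕ} (W : WeakComb p)

/-- W is p-transversal at P with respect to (α, π), where the surjection π is encoded by the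
setoid s of its fibres; the two classes π(φ_P(Δ_P)) = {i',j'} are those of c₀ and c₁. -/
def PTransversalAt (α : W.C → ZMod p) (s : Setoid W.C) (P : W.S) (c₀ c₁ : W.C) : Prop :=
  ¬ s.r c₀ c₁ ∧
  (∀ δ : W.Δ P, s.r (W.φ P δ) c₀ ∨ s.r (W.φ P δ) c₁) ∧
  (∃ δ : W.Δ P, s.r (W.φ P δ) c₀) ∧ (∃ δ : W.Δ P, s.r (W.φ P δ) c₁) ∧
  ∃ δ : W.Δ P, s.r (W.φ P δ) c₀ ∧
    (∑ δ' : W.Δ P, if s.r (W.φ P δ') c₁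
        then (W.muk P δ δ' : ZMod p) * α (W.φ P δ') else 0) ≠ 0

/-- A p-reduction step with respect to α. -/
def RedStep (α : W.C → ZMod p) (s s' : Setoid W.C) : Prop :=
  ∃ (P : W.S) (c₀ c₁ : W.C), W.PTransversalAt α s P c₀ c₁ ∧ s' = mergeSetoid s c₀ c₁

/-- W is completely p-reductive with respect to α: starting from the identity partition (⊥),
some finite sequence of p-reduction steps reaches the one-class partition (⊤). -/
def CompletelyPReductive (α : W.C → ZMod p) : Prop :=
  Relation.ReflTransGen (W.RedStep α) ⊥ ⊤

/-- β is π-proportional to α, for the surjection π encoded by the setoid s: on each class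
of s, β is a scalar multiple of α. -/
def Proportional (s : Setoid W.C) (α β : W.C → ZMod p) : Prop :=
  ∀ c : W.C, ∃ l : ZMod p, ∀ c', s.r c c' → β c' = l * α c'

end WeakComb

/-- A combinatorial quasi-fiber structure of rank r on W. -/
structure QuasiFiber {p : ℕ} (W : WeakComb p) (r : ℕ) where
  /-- which quasi-fiber each component belongs to -/
  g : W.C → Fin r
  g_surj : Function.Surjective g
  /-- multiplicities of components inside the quasi-fibers -/
  m : W.C → ℕ
  m_pos : ∀ c, 0 < m c
  /-- the set of base points -/
  B : Set W.S
  fiber_off_base : ∀ P : W.S, P ∉ B → ∀ δ δ' : W.Δ P, g (W.φ P δ) = g (W.φ P δ')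

namespace WeakComb

variable {p : ℕ} (W : WeakComb p) {r : ℕ}

/-- M_s(δ) for a branch δ at a base point P. -/
noncomputable def Mcoef (F : QuasiFiber W r) (P : W.S) (δ : W.Δ P) (s : Fin r) : ZMod p :=
  ∑ δ' : W.Δ P,
    if W.φ P δ' ≠ W.φ P δ ∧ F.g (W.φ P δ') = s
      then ((F.m (W.φ P δ') * W.μ P δ δ' : ℕ) : ZMod p) else 0

/-- ω_a = Σ_c m_c · a_{g(c)} · σ_c ∈ A¹. -/
noncomputable def omega (F : QuasiFiber W r) (a : Fin r → ZMod p) : W.C → ZMod p :=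
  fun c => (F.m c : ZMod p) * a (F.g c)

/-- The restricted combinatorics W°_s of the quasi-fiber s. -/
noncomputable def restrict (F : QuasiFiber W r) (s : Fin r) : WeakComb p where
  C := {c : W.C // F.g c = s}
  fintypeC := Fintype.ofFinite _
  decEqC := inferInstance
  nonemptyC := by obtain ⟨c, hc⟩ := F.g_surj s; exact ⟨⟨c, hc⟩⟩
  S := {P : W.S // Nonempty (W.Δ P) ∧ ∀ δ : W.Δ P, F.g (W.φ P δ) = s}
  fintypeS := Fintype.ofFinite _
  decEqS := inferInstance
  Δ := fun P => W.Δ P.1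
  fintypeΔ := fun P => inferInstance
  decEqΔ := fun P => inferInstance
  φ := fun P δ => ⟨W.φ P.1 δ, P.2.2 δ⟩
  μ := fun P δ δ' => W.μ P.1 δ δ'
  μ_symm := fun P δ δ' h => W.μ_symm P.1 δ δ' (fun e => h (Subtype.ext e))
  μ_pos := fun P δ δ' h => W.μ_pos P.1 δ δ' (fun e => h (Subtype.ext e))

/-- The restriction ω_a|_s of ω_a to the restricted combinatorics W°_s. -/
noncomputable def omegaRes (F : QuasiFiber W r) (a : Fin r → ZMod p) (s : Fin r) :
    (W.restrict F s).C → ZMod p :=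
  fun c => (F.m c.1 : ZMod p) * a s

end WeakComb

section FiniteSums

variable {R ι κ M : Type*} [CommRing R] [Fintype ι] [Fintype κ] [AddCommGroup M] [Module R M]

lemma sum_mul_comp_eq_sum_fiberwise [DecidableEq κ] (g : ι → κ) (f : ι → R) (a : κ → R) :
    ∑ i, f i * a (g i) = ∑ k, a k * ∑ i, if g i = k then f i else 0 := by
  simp_rw [Finset.mul_sum]
  rw [Finset.sum_comm]
  simp [mul_comm]

lemma sum_mul_eq_of_sum_eq_zero {a f : κ → R} (ha : ∑ k, a k = 0) {t : κ} {y : R}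
    (hf : ∀ k, k ≠ t → f k = y) : ∑ k, a k * f k = a t * (f t - y) :=
  calc ∑ k, a k * f k = ∑ k, a k * (f k - y) := by
        simp [mul_sub, Finset.sum_sub_distrib, ← Finset.sum_mul, ha]
    _ = a t * (f t - y) :=
        Finset.sum_eq_single t (fun k _ hk => by rw [hf k hk, sub_self, mul_zero]) (by simp)

lemma sum_sum_smul_sub_of_symm {w : ι → ι → R} (hw : ∀ i j, w i j = w j i) (α β : ι → R)
    (e : ι → M) :
    ∑ i, ∑ j, (α i * β j * w i j) • (e j - e i) =
      ∑ i, (β i * (∑ j, w i j * α j) - α i * ∑ j, w i j * β j) • e i := by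
  simp_rw [smul_sub, sub_smul, Finset.sum_sub_distrib, Finset.mul_sum, Finset.sum_smul]
  congr 1
  · rw [Finset.sum_comm]
    refine Finset.sum_congr rfl fun i _ => Finset.sum_congr rfl fun j _ => ?_
    rw [hw j i]
    ring_nf
  · refine Finset.sum_congr rfl fun i _ => Finset.sum_congr rfl fun j _ => ?_
    ring_nf

end FiniteSums

section Rank

open Module

variable {R M : Type*} [CommRing R] [IsDomain R] [AddCommGroup M] [Module R M]

lemma finrank_sub_one_le_finrank_ker [Module.Finite R M] (f : M →ₗ[R] R) :
    finrank R M - 1 ≤ finrank R (LinearMap.ker f) := by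
  have rank_nullity : finrank R (M ⧸ LinearMap.ker f) + finrank R (LinearMap.ker f) =
      finrank R M := (LinearMap.ker f).finrank_quotient_add_finrank
  have range_le : finrank R (M ⧸ LinearMap.ker f) ≤ 1 := by
    rw [f.quotKerEquivRange.finrank_eq, ← finrank_self R]
    exact (LinearMap.range f).finrank_le
  omega

lemma finrank_sub_one_le_finrank_quotient_span_singleton {N K : Submodule R M}
    [Module.Finite R K] (hNK : N ≤ K) (x : M) :
    finrank R N - 1 ≤ finrank R (K ⧸ (Submodule.span R {x}).comap K.subtype) := by
  have rank_nullity := ((Submodule.span R {x}).comap K.subtype).finrank_quotient_add_finrank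
  have line_le : finrank R ((Submodule.span R {x}).comap K.subtype) ≤ 1 :=
    calc finrank R ((Submodule.span R {x}).comap K.subtype)
        = finrank R (((Submodule.span R {x}).comap K.subtype).map K.subtype) :=
          (Submodule.equivMapOfInjective _ K.subtype_injective _).finrank_eq
      _ ≤ finrank R (Submodule.span R {x}) := Submodule.finrank_mono (Submodule.map_comap_le _ _)
      _ ≤ 1 := by simpa using finrank_span_le_card (R := R) ({x} : Set M)
  have le_K : finrank R N ≤ finrank R K := Submodule.finrank_mono hNK
  omega

end Rank

section SumZero

variable (R ι : Type*) [CommRing R] [Fintype ι]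

/-- The hyperplane `∑ i, b i = 0` of `ι → R`, over which the parameters of the forms `ω_b` range. -/
def sumZero : Submodule R (ι → R) :=
  LinearMap.ker (∑ i, LinearMap.proj i : (ι → R) →ₗ[R] R)

variable {R ι} in
@[simp]
lemma mem_sumZero {b : ι → R} : b ∈ sumZero R ι ↔ ∑ i, b i = 0 := by
  simp [sumZero]

lemma card_sub_one_le_finrank_sumZero [IsDomain R] :
    Fintype.card ι - 1 ≤ Module.finrank R (sumZero R ι) := by
  rw [← Module.finrank_fintype_fun_eq_card (R := R) (η := ι)]
  exact finrank_sub_one_le_finrank_ker _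

end SumZero

namespace WeakComb

variable {p : ℕ} (W : WeakComb p)

section Wedge

variable (P : W.S)

lemma psiW_self (δ : W.Δ P) : W.psiW P δ δ = 0 :=
  (exteriorPower.ιMulti (ZMod p) 2).map_eq_zero_of_eq ![W.psi P δ, W.psi P δ]
    (i := 0) (j := 1) rfl (by simp)

lemma mkQ_psiW_cycle (δ₁ δ₂ δ₃ : W.Δ P) :
    (W.IP P).mkQ (W.psiW P δ₁ δ₂) + (W.IP P).mkQ (W.psiW P δ₂ δ₃) +
      (W.IP P).mkQ (W.psiW P δ₃ δ₁) = 0 := by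
  rw [← map_add, ← map_add, Submodule.mkQ_apply, Submodule.Quotient.mk_eq_zero]
  exact Submodule.subset_span (Or.inl ⟨δ₁, δ₂, δ₃, rfl⟩)

lemma mkQ_psiW_swap (δ δ' : W.Δ P) :
    (W.IP P).mkQ (W.psiW P δ' δ) = -(W.IP P).mkQ (W.psiW P δ δ') := by
  have h := W.mkQ_psiW_cycle P δ δ' δ'
  rw [psiW_self, map_zero, add_zero] at h
  exact eq_neg_of_add_eq_zero_right h

lemma mkQ_psiW_eq_sub (o δ δ' : W.Δ P) :
    (W.IP P).mkQ (W.psiW P δ δ') =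
      (W.IP P).mkQ (W.psiW P o δ') - (W.IP P).mkQ (W.psiW P o δ) := by
  have h := W.mkQ_psiW_cycle P o δ δ'
  rw [W.mkQ_psiW_swap P o δ', ← sub_eq_add_neg, sub_eq_zero] at h
  exact eq_sub_of_add_eq' h

lemma muk_comm (δ δ' : W.Δ P) : W.muk P δ δ' = W.muk P δ' δ := by
  unfold muk
  split_ifs with h h' h'
  · rfl
  · exact absurd h.symm h'
  · exact absurd h'.symm h
  · exact W.μ_symm P δ δ' h

lemma sum_muC_mul (α : W.C → ZMod p) (δ : W.Δ P) :
    ∑ j, (W.muC P δ j : ZMod p) * α j = ∑ δ', (W.muk P δ δ' : ZMod p) * α (W.φ P δ') := by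
  rw [sum_mul_comp_eq_sum_fiberwise (W.φ P) (fun δ' => (W.muk P δ δ' : ZMod p)) α]
  simp [muC, mul_comm]

lemma wedge_fst_eq_zero_of_resCond (d : W.C → ℕ) {α β : W.C → ZMod p}
    (h : ∀ δ, W.ResCond α β P δ) : (W.wedge d α β).1 P = 0 := by
  rcases isEmpty_or_nonempty (W.Δ P) with _ | ⟨⟨o⟩⟩
  · simp [wedge]
  calc (W.wedge d α β).1 P
      = ∑ δ, ∑ δ', (α (W.φ P δ) * β (W.φ P δ') * (W.muk P δ δ' : ZMod p)) •
          ((W.IP P).mkQ (W.psiW P o δ') - (W.IP P).mkQ (W.psiW P o δ)) := by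
        simp_rw [← W.mkQ_psiW_eq_sub P o]
        rfl
    _ = ∑ δ, (β (W.φ P δ) * (∑ δ', (W.muk P δ δ' : ZMod p) * α (W.φ P δ')) -
          α (W.φ P δ) * ∑ δ', (W.muk P δ δ' : ZMod p) * β (W.φ P δ')) •
          (W.IP P).mkQ (W.psiW P o δ) :=
        sum_sum_smul_sub_of_symm (fun δ δ' => congrArg Nat.cast (W.muk_comm P δ δ'))
          (fun δ => α (W.φ P δ)) (fun δ => β (W.φ P δ)) _
    _ = 0 := Finset.sum_eq_zero fun δ _ => by
        rw [← sum_muC_mul, ← sum_muC_mul, h δ, zero_smul]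

lemma wedge_eq_zero_of_resCond {d : W.C → ℕ} {α β : W.C → ZMod p}
    (h : ∀ P δ, W.ResCond α β P δ) (hα : ∑ j, (d j : ZMod p) * α j = 0)
    (hβ : ∑ j, (d j : ZMod p) * β j = 0) : W.wedge d α β = 0 :=
  Prod.ext (funext fun P => W.wedge_fst_eq_zero_of_resCond P d (h P))
    (funext fun i => by simp [wedge, hα, hβ])

end Wedge

section QuasiFiber

variable {r : ℕ} (F : QuasiFiber W r)

lemma sum_muC_mul_omega (a : Fin r → ZMod p) (P : W.S) (δ : W.Δ P) :
    ∑ j, (W.muC P δ j : ZMod p) * W.omega F a j = ∑ s, a s * W.Mcoef F P δ s := by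
  calc ∑ j, (W.muC P δ j : ZMod p) * W.omega F a j
      = ∑ δ', ((W.muk P δ δ' : ZMod p) * F.m (W.φ P δ')) * a (F.g (W.φ P δ')) := by
        simp only [sum_muC_mul, omega, mul_assoc]
    _ = ∑ s, a s * ∑ δ', if F.g (W.φ P δ') = s
          then (W.muk P δ δ' : ZMod p) * F.m (W.φ P δ') else 0 :=
        sum_mul_comp_eq_sum_fiberwise (fun δ' => F.g (W.φ P δ')) _ a
    _ = ∑ s, a s * W.Mcoef F P δ s := by
        refine Finset.sum_congr rfl fun s _ => congrArg (a s * ·) ?_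
        refine Finset.sum_congr rfl fun δ' _ => ?_
        by_cases h : W.φ P δ' = W.φ P δ <;>
          simp [muk, eq_comm (a := W.φ P δ), h, mul_comm]

lemma Mcoef_eq_zero_of_notMem_base {P : W.S} (hP : P ∉ F.B) (δ : W.Δ P) {s : Fin r}
    (hs : s ≠ F.g (W.φ P δ)) : W.Mcoef F P δ s = 0 :=
  Finset.sum_eq_zero fun δ' _ =>
    if_neg fun h => hs (h.2.symm.trans (F.fiber_off_base P hP δ' δ))

lemma resCond_omega {P : W.S} {δ : W.Δ P} {μδ : ZMod p}
    (hμ : ∀ s, s ≠ F.g (W.φ P δ) → W.Mcoef F P δ s = μδ) {a b : Fin r → ZMod p}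
    (ha : ∑ s, a s = 0) (hb : ∑ s, b s = 0) :
    W.ResCond (W.omega F a) (W.omega F b) P δ := by
  unfold ResCond
  rw [sum_muC_mul_omega, sum_muC_mul_omega, sum_mul_eq_of_sum_eq_zero ha hμ,
    sum_mul_eq_of_sum_eq_zero hb hμ]
  simp only [omega]
  ring

lemma sum_degree_mul_omega_eq_zero {d : W.C → ℕ} {D : ZMod p}
    (hD : ∀ s : Fin r,
      (∑ c : W.C, if F.g c = s then ((d c * F.m c : ℕ) : ZMod p) else 0) = D)
    {a : Fin r → ZMod p} (ha : ∑ s, a s = 0) :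
    ∑ c, (d c : ZMod p) * W.omega F a c = 0 :=
  calc ∑ c, (d c : ZMod p) * W.omega F a c
      = ∑ c, ((d c * F.m c : ℕ) : ZMod p) * a (F.g c) := by
        simp only [omega, Nat.cast_mul, mul_assoc]
    _ = ∑ s, a s * D := by simp_rw [sum_mul_comp_eq_sum_fiberwise F.g _ a, hD]
    _ = 0 := by rw [← Finset.sum_mul, ha, zero_mul]

/-- The map `b ↦ ω_b`, bundled as linear so that its range can be measured; that range is the
space `R_φ` of the paper. -/
noncomputable def omegaL : (Fin r → ZMod p) →ₗ[ZMod p] (W.C → ZMod p) where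
  toFun := W.omega F
  map_add' a b := funext fun c => mul_add (F.m c : ZMod p) (a (F.g c)) (b (F.g c))
  map_smul' t a := funext fun c => mul_left_comm (F.m c : ZMod p) t (a (F.g c))

variable [IsDomain (ZMod p)]

lemma omegaL_injective (h : ∀ s : Fin r, ∃ c : W.C, F.g c = s ∧ ¬ p ∣ F.m c) :
    Function.Injective (W.omegaL F) := by
  refine (injective_iff_map_eq_zero _).mpr fun a ha => funext fun s => ?_
  obtain ⟨c, rfl, hc⟩ := h s
  have mul_eq : (F.m c : ZMod p) * a (F.g c) = 0 := congrFun ha c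
  exact (mul_eq_zero.mp mul_eq).resolve_left (mt (ZMod.natCast_eq_zero_iff _ _).mp hc)

lemma sub_two_le_finrank_H1 {d : W.C → ℕ} {α : W.C → ZMod p}
    (hm : ∀ s : Fin r, ∃ c : W.C, F.g c = s ∧ ¬ p ∣ F.m c)
    (hα : ∀ b : Fin r → ZMod p, ∑ s, b s = 0 → W.wedge d (W.omega F b) α = 0) :
    r - 2 ≤ Module.finrank (ZMod p) (W.H1 d α) := by
  have : IsNoetherianRing (ZMod p) :=
    isNoetherianRing_of_surjective ℤ (ZMod p) (Int.castRingHom _) ZMod.intCast_surjective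
  have le_ker : (sumZero (ZMod p) (Fin r)).map (W.omegaL F) ≤ W.wedgeKer d α := by
    rintro _ ⟨b, hb, rfl⟩
    exact hα b (mem_sumZero.mp hb)
  calc r - 2 = Fintype.card (Fin r) - 1 - 1 := by rw [Fintype.card_fin, Nat.sub_sub]
    _ ≤ Module.finrank (ZMod p) (sumZero (ZMod p) (Fin r)) - 1 :=
        Nat.sub_le_sub_right (card_sub_one_le_finrank_sumZero _ _) 1
    _ = Module.finrank (ZMod p) ((sumZero (ZMod p) (Fin r)).map (W.omegaL F)) - 1 := by
        rw [(Submodule.equivMapOfInjective _ (W.omegaL_injective F hm) _).finrank_eq]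
    _ ≤ Module.finrank (ZMod p) (W.H1 d α) :=
        finrank_sub_one_le_finrank_quotient_span_singleton le_ker α

end QuasiFiber

end WeakComb

theorem stmt10_general {p : ℕ} (W : WeakComb p) (d : W.C → ℕ) {r : ℕ} (F : QuasiFiber W r)
    (ha : ∀ P ∈ F.B, ∀ δ : W.Δ P, ∃ μδ : ZMod p,
      ∀ s : Fin r, s ≠ F.g (W.φ P δ) → W.Mcoef F P δ s = μδ)
    (hb : ∃ D : ZMod p, ∀ s : Fin r,
      (∑ c : W.C, if F.g c = s then ((d c * F.m c : ℕ) : ZMod p) else 0) = D) :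
    (∀ a b : Fin r → ZMod p, (∑ s, a s) = 0 → (∑ s, b s) = 0 →
      W.wedge d (W.omega F a) (W.omega F b) = 0) ∧
    ([IsDomain (ZMod p)] → (∀ s : Fin r, ∃ c : W.C, F.g c = s ∧ ¬ p ∣ F.m c) →
      ∀ a : Fin r → ZMod p, (∑ s, a s) = 0 →
        r - 2 ≤ Module.finrank (ZMod p) (W.H1 d (W.omega F a))) := by
  obtain ⟨D, hD⟩ := hb
  have exists_Mcoef_eq : ∀ (P : W.S) (δ : W.Δ P), ∃ μδ : ZMod p,
      ∀ s, s ≠ F.g (W.φ P δ) → W.Mcoef F P δ s = μδ := fun P δ =>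
    if hP : P ∈ F.B then ha P hP δ
    else ⟨0, fun _ => W.Mcoef_eq_zero_of_notMem_base F hP δ⟩
  have wedge_eq_zero : ∀ a b : Fin r → ZMod p, (∑ s, a s) = 0 → (∑ s, b s) = 0 →
      W.wedge d (W.omega F a) (W.omega F b) = 0 := fun a b hsa hsb =>
    W.wedge_eq_zero_of_resCond
      (fun P δ => (exists_Mcoef_eq P δ).elim fun _ hμ => W.resCond_omega F hμ hsa hsb)
      (W.sum_degree_mul_omega_eq_zero F hD hsa) (W.sum_degree_mul_omega_eq_zero F hD hsb)
  exact ⟨wedge_eq_zero, fun hm a hsa =>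
    W.sub_two_le_finrank_H1 F hm fun b hsb => wedge_eq_zero b a hsb hsa⟩

section Statements

open WeakComb

variable {p : ℕ} [Fact p.Prime]

/-- Theorem `fibered`, part 1. -/
theorem stmt10 (W : WeakComb p) (d : W.C → ℕ) (hd : W.IsDegree d)
    {r : ℕ} (F : QuasiFiber W r)
    (ha : ∀ P ∈ F.B, ∀ δ : W.Δ P, ∃ μδ : ZMod p,
      ∀ s : Fin r, s ≠ F.g (W.φ P δ) → W.Mcoef F P δ s = μδ)
    (hb : ∃ D : ZMod p, ∀ s : Fin r,
      (∑ c : W.C, if F.g c = s then ((d c * F.m c : ℕ) : ZMod p) else 0) = D) :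
    (∀ a b : Fin r → ZMod p, (∑ s, a s) = 0 → (∑ s, b s) = 0 →
      W.wedge d (W.omega F a) (W.omega F b) = 0) ∧
    ((∀ s : Fin r, ∃ c : W.C, F.g c = s ∧ ¬ p ∣ F.m c) →
      ∀ a : Fin r → ZMod p, (∑ s, a s) = 0 →
        r - 2 ≤ Module.finrank (ZMod p) (W.H1 d (W.omega F a))) := by
  have h := stmt10_general W d F ha hb
  exact ⟨h.1, h.2⟩

end Statements
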